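/- Let R be a commutative ring and X = X_1 × ⋯ × X_n an integral d-grid (for all j, differences of distinct elements of X_j are non-zero-divisors; e.g. R an integral domain). Let P ∈ R[X_1,…,X_n] have total degree deg(P) ≤ d_1 + ⋯ + d_n and suppose the coefficient of X_1^{d_1}⋯X_n^{d_n} in P is zero (this holds in particular when deg(P) < d_1 + ⋯ + d_n). Then the number of points x ∈ X with P(x) ≠ 0 is not equal to 1. -/

import Mathlib

open MvPolynomial Finset

/-! Cramer's rule, applied to the Vandermonde matrix of a finite set `S` whose distinct elements
have regular differences, yields regular weights on `S` that annihilate all powers of exponent less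
than `#S - 1`: no division is needed, because the last row of the adjugate consists of smaller
Vandermonde determinants, up to sign. On a product of such sets, the product weights annihilate
every monomial that has a small enough exponent in at least one variable, hence every `P` all of
whose monomials are of this kind. If `P` were nonzero at a single grid point `a`, then the weighted
sum of its values would reduce to a regular multiple of `P(a)`, forcing `P(a) = 0`. -/

section Vandermonde

variable {R : Type*} [CommRing R] {m : ℕ}

theorem det_vandermonde_mem_nonZeroDivisors {v : Fin m → R}
    (hv : Pairwise fun i j => v i - v j ∈ nonZeroDivisors R) :
    (Matrix.vandermonde v).det ∈ nonZeroDivisors R := by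
  rw [Matrix.det_vandermonde]
  exact prod_mem fun i _ => prod_mem fun j hj => hv (mem_Ioi.mp hj).ne'

theorem adjugate_vandermonde_last (v : Fin (m + 1) → R) (i : Fin (m + 1)) :
    (Matrix.vandermonde v).adjugate (Fin.last m) i =
      (-1) ^ (i + m : ℕ) * (Matrix.vandermonde (v ∘ i.succAbove)).det := by
  have hminor : (Matrix.vandermonde v).submatrix i.succAbove (Fin.last m).succAbove =
      Matrix.vandermonde (v ∘ i.succAbove) := by
    ext a b
    simp [Matrix.vandermonde_apply]
  rw [Matrix.adjugate_fin_succ_eq_det_submatrix, hminor, Fin.val_last]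

theorem adjugate_vandermonde_last_mem_nonZeroDivisors {v : Fin (m + 1) → R}
    (hv : Pairwise fun i j => v i - v j ∈ nonZeroDivisors R) (i : Fin (m + 1)) :
    (Matrix.vandermonde v).adjugate (Fin.last m) i ∈ nonZeroDivisors R := by
  rw [adjugate_vandermonde_last]
  exact mul_mem (pow_mem isUnit_one.neg.mem_nonZeroDivisors _)
    (det_vandermonde_mem_nonZeroDivisors
      (hv.comp_of_injective Fin.succAbove_right_injective))

theorem sum_adjugate_vandermonde_last_mul_pow (v : Fin (m + 1) → R) {k : ℕ} (hk : k < m) :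
    ∑ i, (Matrix.vandermonde v).adjugate (Fin.last m) i * v i ^ k = 0 := by
  let col : Fin (m + 1) := ⟨k, by omega⟩
  have hcol : Fin.last m ≠ col := (show col < Fin.last m from hk).ne'
  calc ∑ i, (Matrix.vandermonde v).adjugate (Fin.last m) i * v i ^ k
      = ((Matrix.vandermonde v).adjugate * Matrix.vandermonde v) (Fin.last m) col := rfl
    _ = 0 := by rw [Matrix.adjugate_mul, Matrix.smul_apply, Matrix.one_apply_ne hcol, smul_zero]

end Vandermonde

theorem exists_weights_sum_mul_pow_eq_zero {R : Type*} [CommRing R] {S : Finset R}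
    (hS : (S : Set R).Pairwise fun x y => x - y ∈ nonZeroDivisors R) :
    ∃ w : R → R, (∀ x ∈ S, w x ∈ nonZeroDivisors R) ∧
      ∀ k, k + 1 < #S → ∑ x ∈ S, w x * x ^ k = 0 := by
  rcases hcard : #S with _ | m
  · exact ⟨1, fun _ _ => one_mem _, fun _ hk => absurd hk (Nat.not_lt_zero _)⟩
  obtain ⟨v, rfl⟩ : ∃ v : Fin (m + 1) ↪ R, univ.map v = S :=
    ⟨(S.equivFinOfCardEq hcard).symm.toEmbedding.trans (Function.Embedding.subtype _), by
      rw [← map_map, map_univ_equiv, univ_eq_attach, attach_map_val]⟩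
  have hv : Pairwise fun i j => v i - v j ∈ nonZeroDivisors R := fun i j hij =>
    hS (by simp) (by simp) (v.injective.ne hij)
  obtain ⟨w, hw⟩ : ∃ w : R → R, ∀ i,
      w (v i) = (Matrix.vandermonde v).adjugate (Fin.last m) i :=
    ⟨Function.extend v _ 0, v.injective.extend_apply _ _⟩
  refine ⟨w, ?_, fun k hk => ?_⟩
  · simpa only [forall_mem_map, mem_univ, forall_const, hw] using
      adjugate_vandermonde_last_mem_nonZeroDivisors hv
  · simpa only [sum_map, hw] using
      sum_adjugate_vandermonde_last_mul_pow v (Nat.lt_of_succ_lt_succ hk)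

section Grid

variable {σ R : Type*}

theorem sum_piFinset_prod_mul_eval [Fintype σ] [DecidableEq σ] [CommSemiring R]
    (X : σ → Finset R) (w : σ → R → R) (P : MvPolynomial σ R) :
    ∑ x ∈ Fintype.piFinset X, (∏ i, w i (x i)) * eval x P =
      ∑ m ∈ P.support, coeff m P * ∏ i, ∑ y ∈ X i, w i y * y ^ m i := by
  simp_rw [eval_eq', mul_sum, prod_univ_sum, mul_sum, prod_mul_distrib]
  rw [sum_comm]
  simp_rw [mul_left_comm]

theorem exists_lt_of_mem_support_of_totalDegree_le [CommSemiring R] {P : MvPolynomial σ R}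
    {d m : σ →₀ ℕ} (hdeg : P.totalDegree ≤ d.degree) (hcoeff : coeff d P = 0)
    (hm : m ∈ P.support) : ∃ i, m i < d i := by
  by_contra! hle
  obtain ⟨e, rfl⟩ := exists_add_of_le (show d ≤ m from hle)
  have hdeg_add : (d + e).degree ≤ d.degree := (le_totalDegree hm).trans hdeg
  have he : e = 0 := by
    rw [map_add] at hdeg_add
    exact (Finsupp.degree_eq_zero_iff e).mp (by omega)
  rw [he, add_zero] at hm
  exact mem_support_iff.mp hm hcoeff

theorem not_exactly_one_nonzero_general [Finite σ] [CommRing R] {X : σ → Finset R}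
    (hX : ∀ i, (X i : Set R).Pairwise fun x y => x - y ∈ nonZeroDivisors R)
    {P : MvPolynomial σ R} (hP : ∀ m ∈ P.support, ∃ i, m i + 1 < #(X i)) :
    {x : σ → R | (∀ i, x i ∈ X i) ∧ eval x P ≠ 0}.ncard ≠ 1 := by
  classical
  have := Fintype.ofFinite σ
  intro hone
  obtain ⟨a, ha⟩ := Set.ncard_eq_one.mp hone
  obtain ⟨haX, haP⟩ : (∀ i, a i ∈ X i) ∧ eval a P ≠ 0 := ha.ge rfl
  choose w hw hpow using fun i => exists_weights_sum_mul_pow_eq_zero (hX i)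
  have hsum : ∑ x ∈ Fintype.piFinset X, (∏ i, w i (x i)) * eval x P = 0 := by
    rw [sum_piFinset_prod_mul_eval]
    refine sum_eq_zero fun m hm => ?_
    obtain ⟨i, hi⟩ := hP m hm
    rw [prod_eq_zero (mem_univ i) (hpow i _ hi), mul_zero]
  have hvanish : ∀ x ∈ Fintype.piFinset X, x ≠ a → (∏ i, w i (x i)) * eval x P = 0 := by
    intro x hx hxa
    have hxP : eval x P = 0 := by
      by_contra hne
      exact hxa (ha.le ⟨Fintype.mem_piFinset.mp hx, hne⟩)
    rw [hxP, mul_zero]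
  rw [sum_eq_single_of_mem a (Fintype.mem_piFinset.mpr haX) hvanish] at hsum
  have hreg : ∏ i, w i (a i) ∈ nonZeroDivisors R := prod_mem fun i _ => hw i _ (haX i)
  exact haP ((mul_left_mem_nonZeroDivisors_eq_zero_iff hreg).mp hsum)

end Grid

/-- Over an integral grid, a polynomial of total degree `≤ Σ d_j` with vanishing
`d`-coefficient does not have exactly one nonvanishing point on the grid. -/
theorem not_exactly_one_nonzero {R : Type*} [CommRing R] {n : ℕ}
    (X : Fin n → Finset R) (hX : ∀ j, (X j).Nonempty)
    (d : Fin n → ℕ) (hd : ∀ j, d j = (X j).card - 1)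
    (hint : ∀ j, ∀ x ∈ X j, ∀ w ∈ X j, x ≠ w → x - w ∈ nonZeroDivisors R)
    (P : MvPolynomial (Fin n) R) (hdeg : P.totalDegree ≤ ∑ j, d j)
    (hcoeff : MvPolynomial.coeff (Finsupp.equivFunOnFinite.symm d) P = 0) :
    {x : Fin n → R | (∀ j, x j ∈ X j) ∧ MvPolynomial.eval x P ≠ 0}.ncard ≠ 1 := by
  refine not_exactly_one_nonzero_general (fun j x hx y hy => hint j x hx y hy) fun m hm => ?_
  obtain ⟨j, hj⟩ := exists_lt_of_mem_support_of_totalDegree_le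
    (by rwa [Finsupp.degree_eq_sum]) hcoeff hm
  exact ⟨j, Nat.add_lt_of_lt_sub (hd j ▸ hj)⟩
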